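/- For n ≥ 2, the sum over all permutations π of {1,…,n} of the number of order ideals of the inversion poset IP_π equals (n+1)^{n−1}. -/

import Mathlib

/-!
The maximal elements of an ideal of `IP_π` form an antichain of inversions, that is, the set of arcs
of a nonnesting partition of the positions with `π` decreasing along each block. Given `π` and such
a partition, send each letter to the first position of its block. Following Athanasiadis and
Linusson, this yields a parking function, and `π` is recovered from left to right: a position takes
the largest letter mapped to it or, if there is none, the largest unused letter of the block at the
head of a queue, which is first-in-first-out because arcs do not nest. Stopping after `p` positions
gives states interpolating between the pairs (`p = n`) and the parking functions (`p = 0`), and each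
single step is a bijection.

Parking functions are counted by Pollak's argument: among the `n + 1` rotations of a map to
`ZMod (n + 1)`, exactly one is a parking function, by the cycle lemma applied to the excess of cars
over spots.
-/

/-- The set of inversions of a permutation `π`: pairs of positions `(i, j)` with
`i < j` and `π i > π j`. -/
def inversions (n : ℕ) (π : Equiv.Perm (Fin n)) : Set (Fin n × Fin n) :=
  {p | p.1 < p.2 ∧ π p.2 < π p.1}

/-- An order ideal of the inversion poset `IP_π`, where the partial order is
`(i, j) ≤ (a, b)` iff `a ≤ i` and `j ≤ b`. -/
def IsInvIdeal (n : ℕ) (π : Equiv.Perm (Fin n)) (I : Set (Fin n × Fin n)) : Prop :=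
  I ⊆ inversions n π ∧
    ∀ y ∈ I, ∀ x ∈ inversions n π, y.1 ≤ x.1 → x.2 ≤ y.2 → x ∈ I

namespace InversionIdeals

open Finset Function

variable {n : ℕ}

lemma bijOn_setOf_maximal {α : Type*} [PartialOrder α] [Finite α] (P : α → Prop) :
    Set.BijOn (fun I : Set α => {x | Maximal (· ∈ I) x})
      {I | IsRelLowerSet I P} {A | IsAntichain (· ≤ ·) A ∧ ∀ a ∈ A, P a} := by
  refine Set.InvOn.bijOn (f' := fun A => {x | x ∈ lowerClosure A ∧ P x}) ⟨?_, ?_⟩ ?_ ?_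
  · intro I hI
    ext x
    constructor
    · rintro ⟨⟨a, ha, hxa⟩, hx⟩
      exact hI.mem_of_le ha.prop hxa hx
    · intro hx
      obtain ⟨a, hxa, ha⟩ := Finite.exists_le_maximal (p := (· ∈ I)) hx
      exact ⟨⟨a, ha, hxa⟩, hI.prop_of_mem hx⟩
  · rintro A ⟨hA, hAP⟩
    ext x
    constructor
    · rintro ⟨⟨⟨a, ha, hxa⟩, -⟩, hmax⟩
      rwa [hxa.antisymm (hmax ⟨subset_lowerClosure ha, hAP a ha⟩ hxa)]
    · intro hx
      exact ((hA.maximal_mem_lowerClosure_iff_mem).2 hx).mono (fun _ h => h.1)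
        ⟨subset_lowerClosure hx, hAP x hx⟩
  · exact fun I hI => ⟨setOfPred_maximal_antichain _, fun a ha => hI.prop_of_mem ha.prop⟩
  · exact fun A _ a ha => ⟨ha.2, fun b hba hb => ⟨(lowerClosure A).lower hba ha.1, hb⟩⟩

/-- A nonnesting partition of the positions, encoded by the map `b` that sends each position to the
preceding position of its block, its parent, and fixes the first position of each block. -/
structure IsNonnesting (b : Fin n → Fin n) : Prop where
  le : ∀ j, b j ≤ j
  strictMonoOn : StrictMonoOn b {j | b j ≠ j}

/-- The arcs of the partition encoded by `b`. Pairs of positions carry the order of the inversion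
poset, `(i, j) ≤ (i', j')` iff `i' ≤ i` and `j ≤ j'`, through the dual in the first factor. -/
def arcs (b : Fin n → Fin n) : Set ((Fin n)ᵒᵈ × Fin n) :=
  (fun j => (OrderDual.toDual (b j), j)) '' {j | b j ≠ j}

lemma arcs_injective : Injective (arcs (n := n)) := by
  have apply_eq : ∀ b c : Fin n → Fin n, arcs b = arcs c → ∀ j, b j ≠ j → c j = b j := by
    intro b c h j hj
    obtain ⟨k, -, hk⟩ : (OrderDual.toDual (b j), j) ∈ arcs c := h ▸ ⟨j, hj, rfl⟩
    obtain ⟨hk, rfl⟩ := Prod.ext_iff.1 hk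
    exact hk
  intro b c h
  funext j
  by_cases hb : b j = j
  · by_cases hc : c j = j
    · rw [hb, hc]
    · exact apply_eq c b h.symm j hc
  · exact (apply_eq b c h j hb).symm

lemma IsNonnesting.isAntichain_arcs {b : Fin n → Fin n} (hb : IsNonnesting b) :
    IsAntichain (· ≤ ·) (arcs b) := by
  rintro _ ⟨j, hj, rfl⟩ _ ⟨k, hk, rfl⟩ hne ⟨hkj, hjk : j ≤ k⟩
  have hlt : j < k := hjk.lt_of_ne (by rintro rfl; exact hne rfl)
  exact (hb.strictMonoOn hj hk hlt).not_ge hkj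

lemma exists_isNonnesting_arcs_eq {A : Set ((Fin n)ᵒᵈ × Fin n)} (hA : IsAntichain (· ≤ ·) A)
    (hlt : ∀ a ∈ A, OrderDual.ofDual a.1 < a.2) : ∃ b, IsNonnesting b ∧ arcs b = A := by
  have exists_source : ∀ j, ∃ i : Fin n,
      (OrderDual.toDual i, j) ∈ A ∨ i = j ∧ ∀ i', (i', j) ∉ A := by
    intro j
    by_cases h : ∃ i, (OrderDual.toDual i, j) ∈ A
    · exact ⟨h.choose, .inl h.choose_spec⟩
    · exact ⟨j, .inr ⟨rfl, fun i hi => h ⟨i, hi⟩⟩⟩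
  choose b hb using exists_source
  have mem_of_ne : ∀ j, b j ≠ j → (OrderDual.toDual (b j), j) ∈ A :=
    fun j hj => (hb j).resolve_right fun h => hj h.1
  refine ⟨b, ⟨fun j => ?_, fun j hj k hk hjk => ?_⟩, Set.ext fun ⟨i, j⟩ => ⟨?_, fun hij => ?_⟩⟩
  · exact (hb j).elim (fun h => (hlt _ h).le) fun h => h.1.le
  · by_contra! hkj
    exact hA (mem_of_ne j hj) (mem_of_ne k hk) (fun h => hjk.ne (Prod.ext_iff.1 h).2)
      ⟨hkj, hjk.le⟩
  · rintro ⟨j, hj, hij⟩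
    exact hij ▸ mem_of_ne j hj
  · have hbj : (OrderDual.toDual (b j), j) ∈ A := (hb j).resolve_right fun h => h.2 i hij
    refine ⟨j, (hlt _ hbj).ne, ?_⟩
    rcases le_total (b j) (OrderDual.ofDual i) with h | h
    · exact (hA.eq hij hbj ⟨h, le_rfl⟩).symm
    · exact hA.eq hbj hij ⟨h, le_rfl⟩

lemma bijOn_arcs (π : Equiv.Perm (Fin n)) :
    Set.BijOn arcs {b | IsNonnesting b ∧ ∀ j, b j ≠ j → π j < π (b j)}
      {A | IsAntichain (· ≤ ·) A ∧ ∀ a ∈ A, (OrderDual.ofDual a.1, a.2) ∈ inversions n π} := by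
  refine ⟨?_, arcs_injective.injOn, ?_⟩
  · rintro b ⟨hb, hπ⟩
    refine ⟨hb.isAntichain_arcs, ?_⟩
    rintro _ ⟨j, hj, rfl⟩
    exact ⟨(hb.le j).lt_of_ne hj, hπ j hj⟩
  · rintro A ⟨hA, hAπ⟩
    obtain ⟨b, hb, rfl⟩ := exists_isNonnesting_arcs_eq hA fun a ha => (hAπ a ha).1
    exact ⟨b, ⟨hb, fun j hj => (hAπ _ ⟨j, hj, rfl⟩).2⟩, rfl⟩

lemma ncard_setOf_isInvIdeal (π : Equiv.Perm (Fin n)) :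
    {I | IsInvIdeal n π I}.ncard =
      {b | IsNonnesting b ∧ ∀ j, b j ≠ j → π j < π (b j)}.ncard := by
  let e : Set (Fin n × Fin n) ≃ Set ((Fin n)ᵒᵈ × Fin n) :=
    Equiv.Set.congr (OrderDual.toDual.prodCongr (Equiv.refl _))
  let P : (Fin n)ᵒᵈ × Fin n → Prop := fun a => (OrderDual.ofDual a.1, a.2) ∈ inversions n π
  have isRelLowerSet_iff : ∀ I, IsRelLowerSet (e I) P ↔ IsInvIdeal n π I := by
    intro I
    have mem_iff : ∀ i j, (i, j) ∈ e I ↔ (OrderDual.ofDual i, j) ∈ I := fun i j =>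
      Set.mem_image_equiv
    constructor
    · intro h
      exact ⟨fun a ha => h.prop_of_mem ((mem_iff (OrderDual.toDual a.1) a.2).2 ha),
        fun y hy x hx h₁ h₂ => (mem_iff (OrderDual.toDual x.1) x.2).1
          (h.mem_of_le ((mem_iff (OrderDual.toDual y.1) y.2).2 hy) ⟨h₁, h₂⟩ hx)⟩
    · rintro ⟨hsub, hI⟩ ⟨i, j⟩ ha
      rw [mem_iff] at ha
      exact ⟨hsub ha, fun x hx hPx => (mem_iff x.1 x.2).2 (hI _ ha _ hPx hx.1 hx.2)⟩
  calc {I | IsInvIdeal n π I}.ncard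
      = {I | IsRelLowerSet I P}.ncard := (e.bijOn isRelLowerSet_iff).ncard_eq
    _ = {A | IsAntichain (· ≤ ·) A ∧ ∀ a ∈ A, P a}.ncard := (bijOn_setOf_maximal P).ncard_eq
    _ = {b | IsNonnesting b ∧ ∀ j, b j ≠ j → π j < π (b j)}.ncard := (bijOn_arcs π).ncard_eq.symm

/-- Parking functions on `n` cars, with spots numbered from `0`. -/
def IsParking (f : Fin n → ℕ) : Prop :=
  ∀ k ≤ n, k ≤ #{x | f x < k}

lemma IsParking.lt {f : Fin n → ℕ} (hf : IsParking f) (x : Fin n) : f x < n := by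
  have h : #{x | f x < n} = #(univ : Finset (Fin n)) :=
    le_antisymm (card_le_univ _) (by simpa using hf n le_rfl)
  simpa using card_filter_eq_iff.1 h x (mem_univ x)

lemma IsParking.mono {f g : Fin n → ℕ} (hf : IsParking f) (h : ∀ x, g x ≤ f x) : IsParking g :=
  fun k hk => (hf k hk).trans
    (card_le_card (monotone_filter_right _ fun x _ hx => (h x).trans_lt hx))

lemma le_card_filter_lt {α : Type*} [Fintype α] {f : α → ℕ} {k : ℕ} (h : ∀ r < k, ∃ x, f x = r) :
    k ≤ #{x | f x < k} := by
  simpa using card_le_card_of_surjOn (s := ({x | f x < k} : Finset α)) (t := range k) f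
    fun r hr => by
      obtain ⟨x, rfl⟩ := h r (by simpa using hr)
      exact ⟨x, by simpa using hr, rfl⟩

section Splitting

variable {α β : Type*} [DecidableEq β] {p v : β} {f : α → β}

/-- Moves the fiber of `f` over `p` to `v`. -/
def merge (p v : β) (f : α → β) (x : α) : β :=
  if f x = p then v else f x

lemma merge_of_eq {x : α} (h : f x = p) : merge p v f x = v := if_pos h

lemma merge_of_ne {x : α} (h : f x ≠ p) : merge p v f x = f x := if_neg h

lemma merge_self : merge p p f = f := by
  funext x
  exact (em (f x = p)).elim (fun h => (merge_of_eq h).trans h.symm) merge_of_ne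

variable [LinearOrder α]

open Classical in
/-- Moves all elements of the fiber of `f` over `v`, except the greatest one, to `p`. -/
noncomputable def split (p v : β) (f : α → β) (x : α) : β :=
  if f x = v ∧ ∃ y, f y = v ∧ x < y then p else f x

lemma split_of_lt {x y : α} (hx : f x = v) (hy : f y = v) (hxy : x < y) : split p v f x = p :=
  if_pos ⟨hx, y, hy, hxy⟩

lemma split_of_ne {x : α} (h : f x ≠ v) : split p v f x = f x :=
  if_neg fun h' => h h'.1

lemma split_of_forall_le {x : α} (h : ∀ y, f y = v → y ≤ x) : split p v f x = f x :=
  if_neg fun ⟨_, _, hy, hxy⟩ => (h _ hy).not_gt hxy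

lemma split_self : split p p f = f := by
  funext x
  by_cases h : f x = p ∧ ∃ y, f y = p ∧ x < y
  · exact (if_pos h).trans h.1.symm
  · exact if_neg h

lemma split_eq_or (p v : β) (f : α → β) (x : α) :
    split p v f x = f x ∨ split p v f x = p ∧ f x = v := by
  by_cases h : f x = v ∧ ∃ y, f y = v ∧ x < y
  · exact .inr ⟨if_pos h, h.1⟩
  · exact .inl (if_neg h)

lemma le_of_split_eq (hvp : v ≠ p) {x y : α} (hx : split p v f x = v) (hy : f y = v) : y ≤ x := by
  by_contra! hxy
  rcases split_eq_or p v f x with h | h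
  · exact hvp (hx.symm.trans (split_of_lt (h.symm.trans hx) hy hxy))
  · exact hvp (hx.symm.trans h.1)

lemma split_apply_of_ne {x : α} (h : split p v f x ≠ p) : split p v f x = f x :=
  (split_eq_or p v f x).resolve_right fun h' => h h'.1

lemma merge_split (hp : p ∉ Set.range f) : merge p v (split p v f) = f := by
  funext x
  have hx : f x ≠ p := fun h => hp ⟨x, h⟩
  rcases split_eq_or p v f x with h | ⟨h, hxv⟩
  · rw [merge_of_ne (h ▸ hx), h]
  · rw [merge_of_eq h, hxv]

end Splitting

/-- The situation after the letters in the positions `< p` of a permutation have been chosen, for a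
permutation with a nonnesting partition whose arcs are descents. The map `f` sends a chosen letter
to its position, and a letter still to be used to the last chosen position of its block or, if there
is none, to the first position of its block. The map `b` encodes the arcs between chosen
positions. -/
structure IsQueueState (p : ℕ) (f b : Fin n → Fin n) : Prop where
  parking : IsParking fun x => (f x : ℕ)
  exists_eq : ∀ r : Fin n, (r : ℕ) < p → ∃ x, f x = r
  nonnesting : IsNonnesting b
  fixed : ∀ j : Fin n, p ≤ j → b j = j
  descent : ∀ x y, f x = b (f y) → f x ≠ f y → y < x
  injOn : ∀ j, b j ≠ j → Set.InjOn f {x | f x ≤ b j}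

/-- The head `v` of the queue: the letter in position `p` is taken from the fiber of `f` over `v`.
Unless a block starts at `p`, this has to be the first fiber with unused letters, as otherwise arcs
would be nested. -/
def IsHead (f : Fin n → Fin n) (p v : Fin n) : Prop :=
  p ∈ Set.range f ∧ v = p ∨ p ∉ Set.range f ∧ Minimal (fun w => (f ⁻¹' {w}).Nontrivial) v

lemma IsHead.unique {f : Fin n → Fin n} {p v w : Fin n} (hv : IsHead f p v) (hw : IsHead f p w) :
    v = w := by
  rcases hv with ⟨hp, rfl⟩ | ⟨hp, hv⟩ <;> rcases hw with ⟨hp', rfl⟩ | ⟨hp', hw⟩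
  · rfl
  · exact absurd hp hp'
  · exact absurd hp' hp
  · exact le_antisymm (not_lt.1 (hv.not_lt hw.prop)) (not_lt.1 (hw.not_lt hv.prop))

lemma injOn_split_of_minimal {α β : Type*} [LinearOrder α] [LinearOrder β] {f : α → β} {p v : β}
    (hvp : v < p) (hv : Minimal (fun w => (f ⁻¹' {w}).Nontrivial) v) :
    Set.InjOn (split p v f) {x | split p v f x ≤ v} := by
  intro x (hx : split p v f x ≤ v) y (hy : split p v f y ≤ v) hxy
  have hfx := split_apply_of_ne (hx.trans_lt hvp).ne
  have hfy := split_apply_of_ne (hy.trans_lt hvp).ne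
  have hf : f x = f y := hfx.symm.trans (hxy.trans hfy)
  rcases hx.eq_or_lt with hxv | hxv
  · have hyv := hxy.symm.trans hxv
    exact le_antisymm (le_of_split_eq hvp.ne hyv (hfx.symm.trans hxv))
      (le_of_split_eq hvp.ne hxv (hfy.symm.trans hyv))
  · by_contra hne
    exact hv.not_lt ⟨x, rfl, y, hf.symm, hne⟩ (hfx.symm.trans_lt hxv)

namespace IsQueueState

variable {p v : Fin n} {f g b : Fin n → Fin n}

lemma lt_of_apply_ne {q : ℕ} (hf : IsQueueState q f b) {j : Fin n} (hj : b j ≠ j) : (j : ℕ) < q :=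
  not_le.1 fun h => hj (hf.fixed j h)

lemma exists_nontrivial_fiber (hf : IsQueueState p f b) (hp : p ∉ Set.range f) :
    ∃ w < p, (f ⁻¹' {w}).Nontrivial := by
  have card_lt : #(Iio p) < #{x | (f x : ℕ) < p + 1} := by
    rw [Fin.card_Iio]
    exact hf.parking (p + 1) p.isLt
  have maps_to : ∀ x ∈ ({x | (f x : ℕ) < p + 1} : Finset (Fin n)), f x ∈ Iio p := by
    intro x hx
    have hle : f x ≤ p := by simpa [Nat.lt_succ_iff] using hx
    exact mem_Iio.2 (hle.lt_of_ne fun h => hp ⟨x, h⟩)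
  obtain ⟨x, hx, y, -, hxy, hfxy⟩ := exists_ne_map_eq_of_card_lt_of_maps_to card_lt maps_to
  exact ⟨f x, mem_Iio.1 (maps_to x hx), x, rfl, y, hfxy.symm, hxy⟩

lemma exists_isHead (hf : IsQueueState p f b) : ∃ v, IsHead f p v := by
  by_cases hp : p ∈ Set.range f
  · exact ⟨p, .inl ⟨hp, rfl⟩⟩
  · obtain ⟨w, -, hw⟩ := hf.exists_nontrivial_fiber hp
    obtain ⟨v, -, hv⟩ := Finite.exists_le_minimal (p := fun w => (f ⁻¹' {w}).Nontrivial) hw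
    exact ⟨v, .inr ⟨hp, hv⟩⟩

lemma merge_apply_of_le (hg : IsQueueState (p + 1) g b) {j x : Fin n} (hj : b j ≠ j) (hjp : j < p)
    (hx : merge p (b p) g x ≤ b j) : merge p (b p) g x = g x := by
  refine merge_of_ne fun h => hx.not_gt ?_
  rw [merge_of_eq h]
  by_cases hp : b p = p
  · rw [hp]
    exact (hg.nonnesting.le j).trans_lt hjp
  · exact hg.nonnesting.strictMonoOn hj hp hjp

lemma lt_of_eq_parent (hg : IsQueueState (p + 1) g b) (hp : b p ≠ p) {x y : Fin n}
    (hx : g x = b p) (hy : g y = p) : y < x :=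
  hg.descent x y (by rw [hx, hy]) (by rwa [hx, hy])

lemma exists_eq_parent (hg : IsQueueState (p + 1) g b) : ∃ x, g x = b p :=
  hg.exists_eq _ (Nat.lt_succ_iff.2 (hg.nonnesting.le p))

lemma descent_merge (hg : IsQueueState (p + 1) g b) {x y : Fin n} (hyp : merge p (b p) g y < p)
    (hxy : merge p (b p) g x = b (merge p (b p) g y))
    (hne : merge p (b p) g x ≠ merge p (b p) g y) : y < x := by
  have hx : merge p (b p) g x = g x :=
    hg.merge_apply_of_le (hxy.symm.trans_ne hne) hyp hxy.le
  rw [hx] at hxy hne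
  by_cases hy : g y = p
  · rw [merge_of_eq hy] at hxy hne hyp
    obtain ⟨z, hz⟩ := hg.exists_eq_parent
    calc y < z := hg.lt_of_eq_parent hyp.ne hz hy
      _ < x := hg.descent x z (by rw [hxy, hz]) (by rwa [hz])
  · rw [merge_of_ne hy] at hxy hne
    exact hg.descent x y hxy hne

lemma merge_update (hg : IsQueueState (p + 1) g b) :
    IsQueueState p (merge p (b p) g) (update b p p) := by
  have arc : ∀ j, update b p p j ≠ j → update b p p j = b j ∧ b j ≠ j ∧ j < p := by
    intro j hj
    have hjp : j ≠ p := by rintro rfl; simp at hj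
    rw [update_of_ne hjp] at hj ⊢
    exact ⟨rfl, hj, (Fin.le_def.2 (Nat.lt_succ_iff.1 (hg.lt_of_apply_ne hj))).lt_of_ne hjp⟩
  refine ⟨hg.parking.mono fun x => ?_, fun r hr => ?_, ⟨fun j => ?_, fun j hj k hk hjk => ?_⟩,
    fun j hj => ?_, fun x y hxy hne => ?_, fun j hj x hx y hy hxy => ?_⟩
  · by_cases h : g x = p
    · rw [merge_of_eq h, h]
      exact hg.nonnesting.le p
    · rw [merge_of_ne h]
  · obtain ⟨x, rfl⟩ := hg.exists_eq r (by omega)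
    exact ⟨x, merge_of_ne (Fin.ne_of_lt hr)⟩
  · by_cases h : update b p p j = j
    · exact h.le
    · rw [(arc j h).1]
      exact hg.nonnesting.le j
  · rw [(arc j hj).1, (arc k hk).1]
    exact hg.nonnesting.strictMonoOn (arc j hj).2.1 (arc k hk).2.1 hjk
  · by_contra h
    exact (arc j h).2.2.not_ge hj
  · obtain ⟨h, -, hyp⟩ := arc _ (hxy.symm.trans_ne hne)
    exact hg.descent_merge hyp (hxy.trans h) hne
  · obtain ⟨h, hj, hjp⟩ := arc j hj
    rw [h] at hx hy
    rw [hg.merge_apply_of_le hj hjp hx, hg.merge_apply_of_le hj hjp hy] at hxy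
    exact hg.injOn j hj ((hg.merge_apply_of_le hj hjp hx).symm.trans_le hx)
      ((hg.merge_apply_of_le hj hjp hy).symm.trans_le hy) hxy

lemma isHead_merge (hg : IsQueueState (p + 1) g b) : IsHead (merge p (b p) g) p (b p) := by
  obtain ⟨y, hy⟩ := hg.exists_eq p (Nat.lt_succ_self _)
  by_cases hp : b p = p
  · exact .inl ⟨⟨y, by rw [merge_of_eq hy, hp]⟩, hp⟩
  refine .inr ⟨?_, minimal_iff_forall_lt.2 ⟨?_, ?_⟩⟩
  · rintro ⟨x, hx⟩
    by_cases h : g x = p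
    · exact hp ((merge_of_eq h).symm.trans hx)
    · exact h ((merge_of_ne h).symm.trans hx)
  · obtain ⟨z, hz⟩ := hg.exists_eq_parent
    exact ⟨z, (merge_of_ne (hz.trans_ne hp)).trans hz, y, merge_of_eq hy,
      (hg.lt_of_eq_parent hp hz hy).ne'⟩
  · rintro w hw ⟨x, hx, y, hy, hxy⟩
    have apply_eq : ∀ x, merge p (b p) g x = w → g x = w := fun x hx =>
      (merge_of_ne fun h => hw.ne (hx.symm.trans (merge_of_eq h))).symm.trans hx
    have hx := apply_eq x hx
    have hy := apply_eq y hy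
    exact hxy (hg.injOn p hp (hx.trans_le hw.le) (hy.trans_le hw.le) (hx.trans hy.symm))

lemma split_merge (hg : IsQueueState (p + 1) g b) :
    split p (b p) (merge p (b p) g) = g := by
  by_cases hp : b p = p
  · rw [hp, merge_self, split_self]
  obtain ⟨z, hz⟩ := hg.exists_eq_parent
  have hmz : merge p (b p) g z = b p := (merge_of_ne (hz.trans_ne hp)).trans hz
  funext x
  by_cases hx : g x = p
  · rw [split_of_lt (merge_of_eq hx) hmz (hg.lt_of_eq_parent hp hz hx), hx]
  rw [← merge_of_ne (v := b p) hx]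
  by_cases hxv : g x = b p
  · refine split_of_forall_le fun y hy => ?_
    by_cases h : g y = p
    · exact (hg.lt_of_eq_parent hp hxv h).le
    · rw [merge_of_ne h] at hy
      exact (hg.injOn p hp hy.le hxv.le (hy.trans hxv.symm)).le
  · exact split_of_ne (by rwa [merge_of_ne hx])

lemma exists_split_eq (hf : IsQueueState p f b) (hv : (f ⁻¹' {v}).Nontrivial) (r : Fin n)
    (hr : (r : ℕ) < p + 1) : ∃ x, split p v f x = r := by
  obtain ⟨y, hy, z, hz, hyz⟩ := hv.exists_lt
  by_cases hrv : r = v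
  · obtain ⟨x, hx, hmax⟩ := Set.exists_max_image _ id (Set.toFinite (f ⁻¹' {v})) ⟨y, hy⟩
    exact ⟨x, (split_of_forall_le hmax).trans (hx.trans hrv.symm)⟩
  rcases (Nat.lt_succ_iff.1 hr).eq_or_lt with hrp | hrp
  · rw [Fin.ext hrp]
    exact ⟨y, split_of_lt hy hz hyz⟩
  · obtain ⟨x, rfl⟩ := hf.exists_eq r hrp
    exact ⟨x, split_of_ne hrv⟩

lemma parking_split (hf : IsQueueState p f b) (hv : (f ⁻¹' {v}).Nontrivial) :
    IsParking fun x => (split p v f x).val := by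
  intro k hk
  rcases le_or_gt k (p + 1) with hkp | hkp
  · refine le_card_filter_lt fun r hr => ?_
    obtain ⟨x, hx⟩ := hf.exists_split_eq hv ⟨r, hr.trans_le hk⟩ (hr.trans_le hkp)
    exact ⟨x, congrArg Fin.val hx⟩
  · refine (hf.parking k hk).trans (card_le_card fun x hx => ?_)
    simp only [mem_filter_univ] at hx ⊢
    rcases split_eq_or p v f x with h | ⟨h, -⟩
    · rwa [h]
    · rw [h]
      omega

lemma parent_lt (hf : IsQueueState p f b) (hv : (f ⁻¹' {v}).Nontrivial) {j : Fin n}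
    (hj : b j ≠ j) : b j < v := by
  by_contra! h
  obtain ⟨x, hx, y, hy, hxy⟩ := hv
  exact hxy (hf.injOn j hj (hx.trans_le h) (hy.trans_le h) (hx.trans hy.symm))

lemma nonnesting_update (hf : IsQueueState p f b) (hvp : v < p) (hv : (f ⁻¹' {v}).Nontrivial) :
    IsNonnesting (update b p v) := by
  refine ⟨fun j => ?_, fun j (hj : update b p v j ≠ j) k (hk : update b p v k ≠ k) hjk => ?_⟩
  · by_cases hjp : j = p
    · rw [hjp, update_self]
      exact hvp.le
    · rw [update_of_ne hjp]
      exact hf.nonnesting.le j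
  · have hjp : j ≠ p := by
      rintro rfl
      rw [update_of_ne hjk.ne'] at hk
      exact hk (hf.fixed k hjk.le)
    rw [update_of_ne hjp] at hj ⊢
    by_cases hkp : k = p
    · rw [hkp, update_self]
      exact hf.parent_lt hv hj
    · rw [update_of_ne hkp] at hk ⊢
      exact hf.nonnesting.strictMonoOn hj hk hjk

lemma descent_split (hf : IsQueueState p f b) (hp : p ∉ Set.range f) (hvp : v < p)
    (hv : (f ⁻¹' {v}).Nontrivial) {x y : Fin n}
    (hxy : split p v f x = update b p v (split p v f y))
    (hne : split p v f x ≠ split p v f y) : y < x := by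
  by_cases hy : split p v f y = p
  · rw [hy, update_self] at hxy
    have hfy : f y = v := ((split_eq_or p v f y).resolve_left fun h => hp ⟨y, h.symm.trans hy⟩).2
    exact (le_of_split_eq hvp.ne hxy hfy).lt_of_ne fun h => hne (h ▸ rfl)
  · rw [update_of_ne hy] at hxy
    have hxv : split p v f x < v := hxy.trans_lt (hf.parent_lt hv (hxy.symm.trans_ne hne))
    rw [split_apply_of_ne (hxv.trans hvp).ne, split_apply_of_ne hy] at hxy hne
    exact hf.descent x y hxy hne

lemma split_update (hf : IsQueueState p f b) (hp : p ∉ Set.range f) (hvp : v < p)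
    (hv : Minimal (fun w => (f ⁻¹' {w}).Nontrivial) v) :
    IsQueueState (p + 1) (split p v f) (update b p v) := by
  refine ⟨hf.parking_split hv.prop, hf.exists_split_eq hv.prop, hf.nonnesting_update hvp hv.prop,
    fun j hj => ?_, fun x y => hf.descent_split hp hvp hv.prop, fun j hj => ?_⟩
  · have hpj : p < j := Fin.lt_def.2 hj
    rw [update_of_ne hpj.ne']
    exact hf.fixed j hpj.le
  · have parent_le : update b p v j ≤ v := by
      by_cases hjp : j = p
      · rw [hjp, update_self]
      · rw [update_of_ne hjp] at hj ⊢
        exact (hf.parent_lt hv.prop hj).le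
    exact (injOn_split_of_minimal hvp hv).mono fun x hx => le_trans hx parent_le

lemma exists_merge_update_eq (hf : IsQueueState p f b) :
    ∃ g c, IsQueueState (p + 1) g c ∧ merge p (c p) g = f ∧ update c p p = b := by
  obtain ⟨v, hv⟩ := hf.exists_isHead
  have hbp : b p = p := hf.fixed p le_rfl
  rcases hv with ⟨hp, -⟩ | ⟨hp, hv⟩
  · refine ⟨f, b, { hf with
      exists_eq := fun r hr => ?_, fixed := fun j hj => hf.fixed j (by omega) }, ?_, ?_⟩
    · rcases (Nat.lt_succ_iff.1 hr).eq_or_lt with hrp | hrp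
      · exact Fin.ext hrp ▸ hp
      · exact hf.exists_eq r hrp
    · rw [hbp, merge_self]
    · rw [update_eq_self_iff, hbp]
  · obtain ⟨w, hwp, hw⟩ := hf.exists_nontrivial_fiber hp
    have hvp : v < p := (not_lt.1 (hv.not_lt hw)).trans_lt hwp
    refine ⟨split p v f, update b p v, hf.split_update hp hvp hv, ?_, ?_⟩
    · rw [update_self, merge_split hp]
    · rw [update_idem, update_eq_self_iff, hbp]

end IsQueueState

lemma bijOn_merge_update (p : Fin n) :
    Set.BijOn (fun s : (Fin n → Fin n) × (Fin n → Fin n) =>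
        (merge p (s.2 p) s.1, update s.2 p p))
      {s | IsQueueState (p + 1) s.1 s.2} {s | IsQueueState p s.1 s.2} := by
  refine ⟨fun s hs => hs.merge_update, ?_, ?_⟩
  · rintro ⟨g, b⟩ (hg : IsQueueState _ g b) ⟨h, c⟩ (hh : IsQueueState _ h c) heq
    obtain ⟨hmerge : merge p (b p) g = merge p (c p) h, hupdate : update b p p = update c p p⟩ :=
      Prod.ext_iff.1 heq
    have hparent : b p = c p := hg.isHead_merge.unique (hmerge ▸ hh.isHead_merge)
    have hgh : g = h := by rw [← hg.split_merge, hmerge, hparent, hh.split_merge]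
    have hbc : b = c :=
      calc b = update (update b p p) p (b p) := by rw [update_idem, update_eq_self]
        _ = update (update c p p) p (c p) := by rw [hupdate, hparent]
        _ = c := by rw [update_idem, update_eq_self]
    rw [hgh, hbc]
  · rintro ⟨f, b⟩ hf
    obtain ⟨g, c, hg, rfl, rfl⟩ := hf.exists_merge_update_eq
    exact ⟨(g, c), hg, rfl⟩

lemma ncard_isQueueState {p : ℕ} (hp : p ≤ n) :
    {s : (Fin n → Fin n) × (Fin n → Fin n) | IsQueueState p s.1 s.2}.ncard =
      {s : (Fin n → Fin n) × (Fin n → Fin n) | IsQueueState 0 s.1 s.2}.ncard := by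
  induction p with
  | zero => rfl
  | succ p ih => exact (bijOn_merge_update ⟨p, hp⟩).ncard_eq.trans (ih (by omega))

lemma isQueueState_zero_iff {f b : Fin n → Fin n} :
    IsQueueState 0 f b ↔ (IsParking fun x => (f x : ℕ)) ∧ b = id := by
  constructor
  · intro h
    exact ⟨h.parking, funext fun j => h.fixed j j.val.zero_le⟩
  · rintro ⟨hf, rfl⟩
    exact {
      parking := hf
      exists_eq := fun r hr => absurd hr r.val.not_lt_zero
      nonnesting := ⟨fun _ => le_rfl, fun j hj => absurd rfl hj⟩
      fixed := fun _ _ => rfl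
      descent := fun x y hxy hne => absurd hxy hne
      injOn := fun j hj => absurd rfl hj }

lemma IsQueueState.bijective {f b : Fin n → Fin n} (hf : IsQueueState n f b) : Bijective f :=
  Finite.surjective_iff_bijective.1 fun r => hf.exists_eq r r.isLt

lemma isQueueState_symm_iff {π : Equiv.Perm (Fin n)} {b : Fin n → Fin n} :
    IsQueueState n π.symm b ↔ IsNonnesting b ∧ ∀ j, b j ≠ j → π j < π (b j) := by
  constructor
  · intro h
    exact ⟨h.nonnesting, fun j hj => h.descent _ _ (by simp) (by simpa using hj)⟩
  · rintro ⟨hb, hπ⟩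
    exact {
      parking := fun k hk => le_card_filter_lt fun r hr => ⟨π ⟨r, hr.trans_le hk⟩, by simp⟩
      exists_eq := fun r _ => ⟨π r, π.symm_apply_apply r⟩
      nonnesting := hb
      fixed := fun j hj => absurd j.isLt hj.not_gt
      descent := fun x y hxy hne => by simpa [← hxy] using hπ (π.symm y) (hxy.symm.trans_ne hne)
      injOn := fun _ _ => π.symm.injective.injOn }

lemma sum_ncard_isNonnesting :
    ∑ π : Equiv.Perm (Fin n), {b | IsNonnesting b ∧ ∀ j, b j ≠ j → π j < π (b j)}.ncard =
      {s : (Fin n → Fin n) × (Fin n → Fin n) | IsQueueState n s.1 s.2}.ncard := by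
  let F : (Σ π : Equiv.Perm (Fin n), {b | IsNonnesting b ∧ ∀ j, b j ≠ j → π j < π (b j)}) →
      {s : (Fin n → Fin n) × (Fin n → Fin n) | IsQueueState n s.1 s.2} :=
    fun s => ⟨(s.1.symm, s.2), isQueueState_symm_iff.2 s.2.2⟩
  have hF : Bijective F := by
    refine ⟨?_, ?_⟩
    · rintro ⟨π, b, hb⟩ ⟨σ, c, hc⟩ h
      obtain ⟨hπσ, rfl⟩ := Prod.ext_iff.1 (congrArg Subtype.val h)
      obtain rfl : π = σ := Equiv.symm_bijective.injective (DFunLike.coe_injective hπσ)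
      rfl
    · rintro ⟨⟨f, b⟩, hf⟩
      let σ := Equiv.ofBijective f hf.bijective
      exact ⟨⟨σ.symm, b, isQueueState_symm_iff.1 hf⟩, rfl⟩
  simpa [Nat.card_sigma] using Nat.card_eq_of_bijective F hF

lemma ncard_isQueueState_zero :
    {s : (Fin n → Fin n) × (Fin n → Fin n) | IsQueueState 0 s.1 s.2}.ncard =
      {f : Fin n → Fin n | IsParking fun x => (f x : ℕ)}.ncard := by
  have image_eq : (·, id) '' {f : Fin n → Fin n | IsParking fun x => (f x : ℕ)} =
      {s | IsQueueState 0 s.1 s.2} := by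
    ext ⟨f, b⟩
    simp [isQueueState_zero_iff, eq_comm]
  rw [← image_eq, Set.ncard_image_of_injective _ (Prod.mk_left_injective id)]

lemma sum_ncard_isInvIdeal :
    ∑ π : Equiv.Perm (Fin n), {I | IsInvIdeal n π I}.ncard =
      {f : Fin n → Fin n | IsParking fun x => (f x : ℕ)}.ncard :=
  calc ∑ π : Equiv.Perm (Fin n), {I | IsInvIdeal n π I}.ncard
      = ∑ π : Equiv.Perm (Fin n),
          {b | IsNonnesting b ∧ ∀ j, b j ≠ j → π j < π (b j)}.ncard :=
        sum_congr rfl fun π _ => ncard_setOf_isInvIdeal π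
    _ = {s : (Fin n → Fin n) × (Fin n → Fin n) | IsQueueState n s.1 s.2}.ncard :=
        sum_ncard_isNonnesting
    _ = {s : (Fin n → Fin n) × (Fin n → Fin n) | IsQueueState 0 s.1 s.2}.ncard :=
        ncard_isQueueState le_rfl
    _ = {f : Fin n → Fin n | IsParking fun x => (f x : ℕ)}.ncard := ncard_isQueueState_zero

/-- Raney's cycle lemma: the required `t` is the first minimum of `S` on `[0, m)`. -/
lemma existsUnique_forall_le_add {m : ℕ} (hm : 0 < m) {S : ℕ → ℤ}
    (hS : ∀ t, S (t + m) = S t - 1) : ∃! t, t < m ∧ ∀ k < m, S t ≤ S (t + k) := by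
  obtain ⟨t, htm, ht⟩ := (range m).exists_min_image (fun t => toLex (S t, t)) ⟨0, by simpa⟩
  simp only [mem_range, Prod.Lex.toLex_le_toLex] at htm ht
  have ht' : t < m ∧ ∀ k < m, S t ≤ S (t + k) := by
    refine ⟨htm, fun k hk => ?_⟩
    rcases lt_or_ge (t + k) m with h | h
    · have := ht (t + k) h
      omega
    · obtain ⟨u, hu⟩ := Nat.exists_eq_add_of_le' h
      have := ht u (by omega)
      have := hS u
      rw [hu]
      omega
  have not_lt_of_good : ∀ t u, (t < m ∧ ∀ k < m, S t ≤ S (t + k)) →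
      (u < m ∧ ∀ k < m, S u ≤ S (u + k)) → ¬ t < u := by
    rintro t u ⟨-, ht⟩ ⟨hu, hu'⟩ htu
    have h₁ := ht (u - t) (by omega)
    have h₂ := hu' (t + m - u) (by omega)
    rw [Nat.add_sub_of_le htu.le] at h₁
    rw [Nat.add_sub_of_le (by omega), hS] at h₂
    omega
  exact ⟨t, ht', fun u hu =>
    le_antisymm (not_lt.1 (not_lt_of_good t u ht' hu)) (not_lt.1 (not_lt_of_good u t hu ht'))⟩

/-- The excess of cars over spots on the first `t` spots of a circle of `n + 1` spots, where `g`
lists the preferred spots of `n` cars and spots are counted as often as they are passed. -/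
def excess (g : Fin n → ZMod (n + 1)) (t : ℕ) : ℤ :=
  ∑ i ∈ range t, (#{x | g x = (i : ZMod (n + 1))} - 1 : ℤ)

lemma excess_add (g : Fin n → ZMod (n + 1)) (t : ℕ) {k : ℕ} (hk : k ≤ n + 1) :
    excess g (t + k) = excess g t + (#{x | (g x - t).val < k} - k) := by
  have card_eq : #{x | (g x - t).val < k} =
      ∑ i ∈ range k, #{x | g x = ((t + i : ℕ) : ZMod (n + 1))} := by
    rw [card_eq_sum_card_fiberwise (f := fun x => (g x - t).val) (t := range k)
      (by simp [Set.MapsTo])]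
    refine sum_congr rfl fun i hi => ?_
    have hik : i < k := mem_range.1 hi
    rw [filter_filter]
    congr 1
    refine filter_congr fun x _ => ?_
    rw [Nat.cast_add, ← sub_eq_iff_eq_add']
    constructor
    · rintro ⟨-, h⟩
      rw [← h, ZMod.natCast_zmod_val]
    · intro h
      rw [h, ZMod.val_cast_of_lt (hik.trans_le hk)]
      exact ⟨hik, rfl⟩
  rw [excess, sum_range_add, card_eq]
  simp [excess]

lemma excess_add_period (g : Fin n → ZMod (n + 1)) (t : ℕ) :
    excess g (t + (n + 1)) = excess g t - 1 := by
  rw [excess_add g t le_rfl, filter_true_of_mem fun x _ => ZMod.val_lt _, card_fin]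
  push_cast
  ring

lemma isParking_sub_iff (g : Fin n → ZMod (n + 1)) (t : ℕ) :
    (IsParking fun x => (g x - t).val) ↔ ∀ k < n + 1, excess g t ≤ excess g (t + k) := by
  refine forall_congr' fun k => ?_
  rw [Nat.lt_succ_iff]
  refine forall_congr' fun hk => ?_
  rw [excess_add g t (by omega), le_add_iff_nonneg_right, sub_nonneg, Nat.cast_le]

lemma existsUnique_isParking_sub (g : Fin n → ZMod (n + 1)) :
    ∃! t, IsParking fun x => (g x - t).val := by
  obtain ⟨t, ⟨-, ht⟩, huniq⟩ := existsUnique_forall_le_add n.succ_pos (excess_add_period g)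
  refine ⟨t, (isParking_sub_iff g t).2 ht, fun u hu => ?_⟩
  rw [← ZMod.natCast_zmod_val u] at hu ⊢
  rw [huniq u.val ⟨u.val_lt, (isParking_sub_iff g u.val).1 hu⟩]

lemma ncard_isParking :
    {f : Fin n → Fin n | IsParking fun x => (f x : ℕ)}.ncard * (n + 1) = (n + 1) ^ n := by
  let shift : {f : Fin n → Fin n | IsParking fun x => (f x : ℕ)} × ZMod (n + 1) →
      (Fin n → ZMod (n + 1)) := fun p x => (p.1.1 x : ℕ) + p.2
  have val_cast : ∀ i : Fin n, ((i : ℕ) : ZMod (n + 1)).val = i :=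
    fun i => ZMod.val_cast_of_lt (i.isLt.trans n.lt_succ_self)
  have hshift : Bijective shift := by
    refine ⟨?_, fun g => ?_⟩
    · rintro ⟨⟨f, hf⟩, t⟩ ⟨⟨f', hf'⟩, t'⟩ h
      have ht : t = t' := by
        refine (existsUnique_isParking_sub (shift ⟨⟨f, hf⟩, t⟩)).unique ?_ ?_
        · simpa [shift, val_cast] using hf
        · rw [h]
          simpa [shift, val_cast] using hf'
      subst ht
      congr
      funext x
      have := congrArg ZMod.val (add_right_cancel (congrFun h x))
      simpa [val_cast, Fin.val_inj] using this
    · obtain ⟨t, ht, -⟩ := existsUnique_isParking_sub g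
      refine ⟨⟨⟨fun x => ⟨(g x - t).val, ht.lt x⟩, ht⟩, t⟩, funext fun x => ?_⟩
      simp [shift]
  rw [← Nat.card_coe_set_eq]
  simpa using Nat.card_eq_of_bijective shift hshift

end InversionIdeals

/-- The sum over all permutations `π` of `{1, …, n}` of the number of order
ideals of the inversion poset `IP_π` equals `(n+1)^(n-1)`. -/
theorem sum_ideal_counts (n : ℕ) (hn : 2 ≤ n) :
    ∑ π : Equiv.Perm (Fin n),
        Set.ncard {I : Set (Fin n × Fin n) | IsInvIdeal n π I} =
      (n + 1) ^ (n - 1) := by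
  refine Nat.eq_of_mul_eq_mul_right n.succ_pos ?_
  calc (∑ π : Equiv.Perm (Fin n), {I | IsInvIdeal n π I}.ncard) * (n + 1)
      = {f : Fin n → Fin n | InversionIdeals.IsParking fun x => (f x : ℕ)}.ncard * (n + 1) := by
        rw [InversionIdeals.sum_ncard_isInvIdeal]
    _ = (n + 1) ^ n := InversionIdeals.ncard_isParking
    _ = (n + 1) ^ (n - 1) * (n + 1) := (pow_sub_one_mul (by omega) (n + 1)).symm
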